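/- Let X > 1, let E₁(z) = ∫_0^∞ e^{−z−t}/(z+t) dt for z ∈ ℂ not on the closed negative real axis, let u : ℝ → ℝ be a smooth (C^∞) nonnegative function supported in [1,e] with ∫ u(y) dy = 1, set U(z) = ∫_1^e u(y) E₁(z log y) dy, and define F_X(ϑ) = −Log(1 − e^{−iϑ}) − Σ_{j∈ℤ} U(i(ϑ + 2πj) log X) for real ϑ with ϑ/(2π) ∉ ℤ. Then the logarithmic singularities at ϑ = 0 cancel: the limit lim_{ϑ→0} F_X(ϑ) exists and equals Σ_{m=1}^{∞} (1/m) ∫_{min(e^{m/log X}, e)}^{e} u(y) dy (a sum in which all terms with m ≥ log X vanish). -/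

import Mathlib

open MeasureTheory Complex Filter

/-- The principal exponential integral `E₁(z) = ∫_0^∞ e^{−z−t}/(z+t) dt`. -/
noncomputable def expInt (z : ℂ) : ℂ := ∫ t in Set.Ioi (0 : ℝ), Complex.exp (-z - t) / (z + t)

/-- `U(z) = ∫_1^e u(y) E₁(z log y) dy`. -/
noncomputable def Ufun (u : ℝ → ℝ) (z : ℂ) : ℂ :=
  ∫ y in (1 : ℝ)..(Real.exp 1), (u y : ℂ) * expInt (z * Real.log y)

/-- `F_X(ϑ) = −Log(1 − e^{−iϑ}) − Σ_{j∈ℤ} U(i(ϑ + 2πj) log X)`. -/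
noncomputable def FX (u : ℝ → ℝ) (X : ℝ) (ϑ : ℝ) : ℂ :=
  -Complex.log (1 - Complex.exp (-(Complex.I * ϑ))) -
    ∑' j : ℤ, Ufun u (Complex.I * ((ϑ : ℂ) + 2 * Real.pi * j) * Real.log X)

/-!
Put `l = log X` and let `v` be the density of `l * log y` when `y` has density `u`. Then
`U (l z) = ∫_0^∞ v(s) E₁(z s) ds =: T(z)`. One integration by parts, which replaces `E₁` by the
bounded function `E₂(w) = O(|w|^{-1/2})`, gives `T(z) = O(|z|^{-3/2})` on the closed right half
plane, so that `∑_j T(z + 2πij)` converges locally uniformly up to the imaginary axis. For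
`0 < re z`, integrating by parts the other way gives the Laplace representation
`T(z) = ∫_0^∞ V(s)/s e^{-zs} ds` with `V(s) = ∫_0^s v`, and Poisson summation yields
`∑_j T(z + 2πij) = ∑_{m ≥ 1} V(m)/m e^{-mz}`. Subtracting this from
`-log(1 - e^{-z}) = ∑_{m ≥ 1} e^{-mz}/m` leaves `∑_{m ≥ 1} (1 - V(m))/m e^{-mz}`, a finite sum since
`V(m) = 1` for `m ≥ l`. It is continuous in `z`, so letting `re z → 0` gives `F_X(θ)` on the
imaginary axis away from `2πiℤ`, and letting `θ → 0` gives the limit.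
-/

open Set Asymptotics
open scoped FourierTransform Real Topology

section ExpInt

variable {w : ℂ} {t : ℝ}

lemma mem_slitPlane_of_re_nonneg (hw : 0 ≤ w.re) (hw0 : w ≠ 0) : w ∈ slitPlane := by
  rw [mem_slitPlane_iff]
  rcases hw.lt_or_eq with hpos | hzero
  · exact .inl hpos
  · exact .inr fun him => hw0 (Complex.ext hzero.symm him)

lemma norm_le_norm_add_ofReal (hw : 0 ≤ w.re) (ht : 0 ≤ t) : ‖w‖ ≤ ‖w + t‖ := by
  rw [Complex.norm_def, Complex.norm_def]
  refine Real.sqrt_le_sqrt ?_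
  simp only [normSq_apply, add_re, ofReal_re, add_im, ofReal_im, add_zero]
  nlinarith [mul_nonneg hw ht]

lemma le_norm_add_ofReal (hw : 0 ≤ w.re) : t ≤ ‖w + t‖ :=
  calc t ≤ (w + t).re := by simpa using hw
    _ ≤ ‖w + t‖ := re_le_norm _

lemma exists_forall_mem_ball_le_norm_add_ofReal (hw : w ∈ slitPlane) :
    ∃ δ > 0, ∀ z ∈ Metric.ball w δ, ∀ t : ℝ, 0 ≤ t → δ ≤ ‖z + t‖ := by
  obtain ⟨ε, hε, hball⟩ := Metric.isOpen_iff.1 isOpen_slitPlane w hw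
  refine ⟨ε / 2, by positivity, fun z hz t ht => ?_⟩
  by_contra! hlt
  have hmem : ((-t : ℝ) : ℂ) ∈ Metric.ball w ε := by
    rw [mem_ball_iff_norm] at hz ⊢
    calc ‖((-t : ℝ) : ℂ) - w‖ = ‖(z - w) - (z + t)‖ := by congr 1; push_cast; ring
      _ ≤ ‖z - w‖ + ‖z + t‖ := norm_sub_le _ _
      _ < ε := by linarith
  exact absurd (ofReal_mem_slitPlane.1 (hball hmem)) (by linarith)

lemma add_ofReal_ne_zero (hw : w ∈ slitPlane) (ht : 0 ≤ t) : w + t ≠ 0 := by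
  obtain ⟨δ, hδ, hle⟩ := exists_forall_mem_ball_le_norm_add_ofReal hw
  exact norm_pos_iff.1 (hδ.trans_le (hle w (Metric.mem_ball_self hδ) t ht))

lemma expInt_eq_integral (w : ℂ) :
    expInt w = ∫ t in Ioi (0 : ℝ), exp (-(w + t)) / (w + t) := by
  simp only [expInt, neg_add']

lemma norm_exp_neg_add_ofReal (w : ℂ) (t : ℝ) :
    ‖exp (-(w + t))‖ = Real.exp (-w.re) * Real.exp (-t) := by
  rw [norm_exp, ← Real.exp_add]
  simp only [neg_re, add_re, ofReal_re, neg_add]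

lemma integrableOn_exp_neg_add_ofReal (w : ℂ) :
    IntegrableOn (fun t : ℝ => exp (-(w + t))) (Ioi 0) := by
  refine ((integrableOn_exp_neg_Ioi 0).const_mul (Real.exp (-w.re))).mono'
    (by fun_prop) (.of_forall fun t => ?_)
  rw [norm_exp_neg_add_ofReal]

lemma integral_exp_neg_add_ofReal (w : ℂ) :
    ∫ t in Ioi (0 : ℝ), exp (-(w + t)) = exp (-w) := by
  have hsplit (t : ℝ) : exp (-(w + t)) = exp (-w) * (Real.exp (-t) : ℂ) := by
    rw [neg_add, Complex.exp_add]
    push_cast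
    rfl
  simp_rw [hsplit]
  rw [integral_const_mul, integral_complex_ofReal, integral_exp_neg_Ioi_zero, ofReal_one, mul_one]

lemma measurable_exp_neg_div_add_ofReal (w : ℂ) :
    Measurable fun t : ℝ => exp (-(w + t)) / (w + t) := by
  fun_prop

lemma integrableOn_exp_neg_div_add_ofReal (hw : w ∈ slitPlane) :
    IntegrableOn (fun t : ℝ => exp (-(w + t)) / (w + t)) (Ioi 0) := by
  obtain ⟨δ, hδ, hle⟩ := exists_forall_mem_ball_le_norm_add_ofReal hw
  refine ((integrableOn_exp_neg_add_ofReal w).norm.div_const δ).mono'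
    (measurable_exp_neg_div_add_ofReal w).aestronglyMeasurable ?_
  filter_upwards [ae_restrict_mem measurableSet_Ioi] with t ht
  rw [norm_div]
  gcongr
  exact hle w (Metric.mem_ball_self hδ) t (le_of_lt ht)

lemma hasDerivAt_exp_neg_div (hw : w ≠ 0) :
    HasDerivAt (fun z => exp (-z) / z) (-exp (-w) * (w⁻¹ + w⁻¹ ^ 2)) w := by
  refine ((hasDerivAt_neg w).cexp.div (hasDerivAt_id w) hw).congr_deriv ?_
  simp only [id]
  field_simp
  ring

lemma norm_exp_neg_mul_inv_add_inv_sq_le {z : ℂ} {δ : ℝ} (hδ : 0 < δ)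
    (hz : z ∈ Metric.ball w δ) (hle : δ ≤ ‖z + t‖) :
    ‖-exp (-(z + t)) * ((z + t)⁻¹ + (z + t)⁻¹ ^ 2)‖ ≤
      Real.exp (δ - w.re) * (δ⁻¹ + δ⁻¹ ^ 2) * Real.exp (-t) := by
  have hre : -z.re ≤ δ - w.re := by
    have := (abs_re_le_norm (z - w)).trans (mem_ball_iff_norm.1 hz).le
    rw [sub_re] at this
    linarith [neg_abs_le (z.re - w.re)]
  have hinv : ‖(z + t)⁻¹‖ ≤ δ⁻¹ := by
    rw [norm_inv]
    exact inv_anti₀ hδ hle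
  calc ‖-exp (-(z + t)) * ((z + t)⁻¹ + (z + t)⁻¹ ^ 2)‖
      ≤ Real.exp (-z.re) * Real.exp (-t) * (‖(z + t)⁻¹‖ + ‖(z + t)⁻¹‖ ^ 2) := by
        rw [norm_mul, norm_neg, norm_exp_neg_add_ofReal, ← norm_pow]
        gcongr
        exact norm_add_le _ _
    _ ≤ Real.exp (δ - w.re) * Real.exp (-t) * (δ⁻¹ + δ⁻¹ ^ 2) := by gcongr
    _ = _ := by ring

lemma tendsto_exp_neg_div_add_ofReal_atTop (w : ℂ) :
    Tendsto (fun t : ℝ => exp (-(w + t)) / (w + t)) atTop (𝓝 0) := by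
  have hinv : Tendsto (fun t : ℝ => (w + t)⁻¹) atTop (𝓝 0) :=
    tendsto_inv₀_cobounded.comp ((tendsto_const_add_cobounded w).comp
      (RCLike.tendsto_ofReal_atTop_cobounded ℂ))
  refine hinv.zero_mul_isBoundedUnder_le ?_ |>.congr fun t => inv_mul_eq_div _ _
  refine isBoundedUnder_of_eventually_le (a := Real.exp (-w.re)) ?_
  filter_upwards [eventually_ge_atTop 0] with t ht
  rw [Function.comp_apply, norm_exp_neg_add_ofReal]
  exact mul_le_of_le_one_right (Real.exp_pos _).le (Real.exp_le_one_iff.2 (neg_nonpos.2 ht))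

lemma hasDerivAt_expInt (hw : w ∈ slitPlane) :
    HasDerivAt expInt (-(exp (-w) / w)) w := by
  obtain ⟨δ, hδ, hle⟩ := exists_forall_mem_ball_le_norm_add_ofReal hw
  have hderiv := hasDerivAt_integral_of_dominated_loc_of_deriv_le
    (μ := volume.restrict (Ioi (0 : ℝ)))
    (F := fun (z : ℂ) (t : ℝ) => exp (-(z + t)) / (z + t))
    (F' := fun z t => -exp (-(z + t)) * ((z + t)⁻¹ + (z + t)⁻¹ ^ 2))
    (bound := fun t => Real.exp (δ - w.re) * (δ⁻¹ + δ⁻¹ ^ 2) * Real.exp (-t))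
    (Metric.ball_mem_nhds w hδ)
    (.of_forall fun z => (measurable_exp_neg_div_add_ofReal z).aestronglyMeasurable)
    (integrableOn_exp_neg_div_add_ofReal hw)
    (Measurable.aestronglyMeasurable (by fun_prop))
    (by
      filter_upwards [ae_restrict_mem measurableSet_Ioi] with t ht z hz
      exact norm_exp_neg_mul_inv_add_inv_sq_le hδ hz (hle z hz t (le_of_lt ht)))
    ((integrableOn_exp_neg_Ioi 0).const_mul _)
    (by
      filter_upwards [ae_restrict_mem measurableSet_Ioi] with t ht z hz
      have hne : z + t ≠ 0 := norm_pos_iff.1 (hδ.trans_le (hle z hz t (le_of_lt ht)))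
      exact (hasDerivAt_exp_neg_div hne).comp_add_const z t)
  have hFTC := integral_Ioi_of_hasDerivAt_of_tendsto' (a := 0)
    (fun t ht => ((hasDerivAt_exp_neg_div (add_ofReal_ne_zero hw ht)).comp_const_add
      w (t : ℂ)).comp_ofReal) hderiv.1 (tendsto_exp_neg_div_add_ofReal_atTop w)
  rw [hFTC] at hderiv
  simpa [funext expInt_eq_integral] using hderiv.2

lemma continuousOn_expInt : ContinuousOn expInt slitPlane :=
  fun _ hw => (hasDerivAt_expInt hw).continuousAt.continuousWithinAt

lemma norm_mul_expInt_le (hw : 0 ≤ w.re) : ‖w * expInt w‖ ≤ Real.exp (-w.re) := by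
  rw [expInt_eq_integral, ← integral_const_mul]
  calc ‖∫ t in Ioi (0 : ℝ), w * (exp (-(w + t)) / (w + t))‖
      ≤ ∫ t in Ioi (0 : ℝ), Real.exp (-w.re) * Real.exp (-t) := by
        refine norm_integral_le_of_norm_le ((integrableOn_exp_neg_Ioi 0).const_mul _) ?_
        filter_upwards [ae_restrict_mem measurableSet_Ioi] with t ht
        rw [← norm_exp_neg_add_ofReal, mul_div_left_comm, norm_mul, norm_div]
        exact mul_le_of_le_one_right (norm_nonneg _)
          (div_le_one_of_le₀ (norm_le_norm_add_ofReal hw (le_of_lt ht)) (norm_nonneg _))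
    _ = Real.exp (-w.re) := by rw [integral_const_mul, integral_exp_neg_Ioi_zero, mul_one]

/-- The exponential integral `E₂` of order two, in the form given by the recursion
`E₂(w) = e^{-w} - w E₁(w)`. It is minus the antiderivative of `E₁` that vanishes at infinity. -/
noncomputable def expInt₂ (w : ℂ) : ℂ := exp (-w) - w * expInt w

lemma hasDerivAt_expInt₂ (hw : w ∈ slitPlane) : HasDerivAt expInt₂ (-expInt w) w := by
  have hw0 : w ≠ 0 := slitPlane_ne_zero hw
  refine ((hasDerivAt_neg w).cexp.sub
    ((hasDerivAt_id w).mul (hasDerivAt_expInt hw))).congr_deriv ?_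
  simp only [id]
  field_simp
  ring

lemma continuousOn_expInt₂ : ContinuousOn expInt₂ slitPlane :=
  fun _ hw => (hasDerivAt_expInt₂ hw).continuousAt.continuousWithinAt

lemma expInt₂_eq_integral (hw : w ∈ slitPlane) :
    expInt₂ w = ∫ t in Ioi (0 : ℝ), t / (w + t) * exp (-(w + t)) := by
  rw [expInt₂, expInt_eq_integral, ← integral_exp_neg_add_ofReal, ← integral_const_mul,
    ← integral_sub (integrableOn_exp_neg_add_ofReal w)
      ((integrableOn_exp_neg_div_add_ofReal hw).const_mul w)]
  refine setIntegral_congr_fun measurableSet_Ioi fun t ht => ?_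
  have hne := add_ofReal_ne_zero hw (le_of_lt ht)
  field_simp
  ring

lemma norm_expInt₂_le_two (hw : 0 ≤ w.re) : ‖expInt₂ w‖ ≤ 2 := by
  have hexp : Real.exp (-w.re) ≤ 1 := Real.exp_le_one_iff.2 (neg_nonpos.2 hw)
  calc ‖expInt₂ w‖ ≤ ‖exp (-w)‖ + ‖w * expInt w‖ := norm_sub_le _ _
    _ ≤ Real.exp (-w.re) + Real.exp (-w.re) := by
        rw [norm_exp, neg_re]
        gcongr
        exact norm_mul_expInt_le hw
    _ ≤ 2 := by linarith

lemma div_norm_add_ofReal_le_rpow (hw : 0 ≤ w.re) (hw0 : w ≠ 0) (ht : 0 < t) :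
    t / ‖w + t‖ ≤ ‖w‖ ^ (-(1 / 2) : ℝ) * t ^ (1 / 2 : ℝ) := by
  have hw_pos : 0 < ‖w‖ := norm_pos_iff.2 hw0
  rw [Real.rpow_neg hw_pos.le, ← Real.sqrt_eq_rpow, ← Real.sqrt_eq_rpow, inv_mul_eq_div]
  rw [div_le_div_iff₀ (ht.trans_le (le_norm_add_ofReal hw)) (Real.sqrt_pos.2 hw_pos)]
  calc t * √‖w‖ = √t * (√t * √‖w‖) := by rw [← mul_assoc, Real.mul_self_sqrt ht.le]
    _ ≤ √t * (√‖w + t‖ * √‖w + t‖) := by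
        gcongr
        · exact le_norm_add_ofReal hw
        · exact norm_le_norm_add_ofReal hw ht.le
    _ = √t * ‖w + t‖ := by rw [Real.mul_self_sqrt (norm_nonneg _)]

lemma norm_expInt₂_le_rpow (hw : 0 ≤ w.re) (hw0 : w ≠ 0) :
    ‖expInt₂ w‖ ≤ ‖w‖ ^ (-(1 / 2) : ℝ) * Real.Gamma (3 / 2) := by
  have hexp : Real.exp (-w.re) ≤ 1 := Real.exp_le_one_iff.2 (neg_nonpos.2 hw)
  rw [expInt₂_eq_integral (mem_slitPlane_of_re_nonneg hw hw0),
    Real.Gamma_eq_integral (by norm_num), ← integral_const_mul]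
  refine norm_integral_le_of_norm_le
    ((Real.GammaIntegral_convergent (by norm_num)).const_mul _) ?_
  filter_upwards [ae_restrict_mem measurableSet_Ioi] with t (ht : 0 < t)
  calc ‖t / (w + t) * exp (-(w + t))‖
      = t / ‖w + t‖ * (Real.exp (-w.re) * Real.exp (-t)) := by
        rw [norm_mul, norm_div, norm_real, Real.norm_of_nonneg ht.le, norm_exp_neg_add_ofReal]
    _ ≤ ‖w‖ ^ (-(1 / 2) : ℝ) * t ^ (1 / 2 : ℝ) * (1 * Real.exp (-t)) := by
        gcongr
        exact div_norm_add_ofReal_le_rpow hw hw0 ht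
    _ = ‖w‖ ^ (-(1 / 2) : ℝ) * (Real.exp (-t) * t ^ (3 / 2 - 1 : ℝ)) := by
        norm_num
        ring

end ExpInt

section Transform

/-- The integral transform of a density `v` on the half line with kernel `E₁`. The substitution
`y = exp (s / log X)` turns the function `U` of the paper into such a transform, with the factor
`log X` absorbed into `v`. -/
noncomputable def expIntTransform (v : ℝ → ℝ) (z : ℂ) : ℂ :=
  ∫ s in Ioi (0 : ℝ), (v s : ℂ) * expInt (z * s)

variable {v : ℝ → ℝ} {z : ℂ} {s : ℝ}

lemma re_mul_ofReal_nonneg (hz : 0 ≤ z.re) (hs : 0 ≤ s) : 0 ≤ (z * s).re := by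
  rw [re_mul_ofReal]
  exact mul_nonneg hz hs

lemma mul_ofReal_mem_slitPlane (hz : 0 ≤ z.re) (hz0 : z ≠ 0) (hs : 0 < s) : z * s ∈ slitPlane :=
  mem_slitPlane_of_re_nonneg (re_mul_ofReal_nonneg hz hs.le)
    (mul_ne_zero hz0 (ofReal_ne_zero.2 hs.ne'))

lemma hasDerivAt_comp_mul_ofReal {f : ℂ → ℂ} {f' : ℂ} (hf : HasDerivAt f f' (z * s)) :
    HasDerivAt (fun r : ℝ => f (z * r)) (f' * z) s :=
  (hf.comp (s : ℂ) (hasDerivAt_const_mul z)).comp_ofReal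

lemma continuousOn_comp_mul_ofReal {f : ℂ → ℂ} (hf : ContinuousOn f slitPlane) (hz : 0 ≤ z.re)
    (hz0 : z ≠ 0) : ContinuousOn (fun r : ℝ => f (z * r)) (Ioi 0) :=
  hf.comp (by fun_prop) fun _ hr => mul_ofReal_mem_slitPlane hz hz0 hr

lemma norm_ofReal_mul_expInt_le (hz : 0 ≤ z.re) (hz0 : z ≠ 0) (hs : 0 < s) (c : ℝ) :
    ‖(c : ℂ) * expInt (z * s)‖ ≤ ‖c / s‖ / ‖z‖ * Real.exp (-(z * s).re) := by
  have hE := norm_mul_expInt_le (re_mul_ofReal_nonneg hz hs.le)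
  calc ‖(c : ℂ) * expInt (z * s)‖ = ‖c / s‖ / ‖z‖ * ‖z * s * expInt (z * s)‖ := by
        simp only [norm_mul, norm_div, norm_real, Real.norm_of_nonneg hs.le]
        field_simp
    _ ≤ ‖c / s‖ / ‖z‖ * Real.exp (-(z * s).re) := by gcongr

lemma eventually_atTop_eq_zero_of_hasCompactSupport (hv : HasCompactSupport v) :
    ∀ᶠ s in atTop, v s = 0 := by
  rw [hasCompactSupport_iff_eventuallyEq, coclosedCompact_eq_cocompact] at hv
  exact hv.filter_mono atTop_le_cocompact

lemma hasDerivAt_zero_of_support_subset_Ioi (hv : DifferentiableAt ℝ v 0)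
    (hv_supp : Function.support v ⊆ Ioi 0) : HasDerivAt v 0 0 := by
  have hzero (s : ℝ) (hs : s ∈ Iic 0) : v s = 0 :=
    Function.notMem_support.1 fun h => (mem_Iic.1 hs).not_gt (hv_supp h)
  have hleft : HasDerivWithinAt v 0 (Iic 0) 0 :=
    (hasDerivWithinAt_const 0 (Iic 0) 0).congr hzero (hzero 0 self_mem_Iic)
  have hderiv : deriv v 0 = 0 :=
    (uniqueDiffOn_Iic 0 0 self_mem_Iic).eq_deriv _ hv.hasDerivAt.hasDerivWithinAt hleft
  simpa only [hderiv] using hv.hasDerivAt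

lemma continuous_div_self_of_hasDerivAt_zero (hv : Continuous v) (hv0 : v 0 = 0)
    (hv' : HasDerivAt v 0 0) : Continuous fun s => v s / s := by
  have hslope : (fun s => v s / s) = dslope v 0 := by
    ext s
    rcases eq_or_ne s 0 with rfl | hs
    · rw [dslope_same, hv'.deriv, div_zero]
    · rw [dslope_of_ne _ hs, slope_def_field, hv0, sub_zero, sub_zero]
  rw [hslope, ← continuousOn_univ, continuousOn_dslope univ_mem]
  exact ⟨hv.continuousOn, hv'.differentiableAt⟩

lemma integrable_div_self (hv : ContDiff ℝ 1 v) (hv_cpt : HasCompactSupport v)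
    (hv_supp : Function.support v ⊆ Ioi 0) : Integrable fun s => v s / s := by
  have hv0 : v 0 = 0 := Function.notMem_support.1 fun h => (mem_Ioi.1 (hv_supp h)).false
  have hcont := continuous_div_self_of_hasDerivAt_zero hv.continuous hv0
    (hasDerivAt_zero_of_support_subset_Ioi (hv.differentiable one_ne_zero 0) hv_supp)
  refine hcont.integrable_of_hasCompactSupport (hv_cpt.mono ?_)
  exact fun s hs h => hs (by simp only [h, zero_div])

lemma integrableOn_mul_expInt (hv : ContDiff ℝ 1 v) (hv_cpt : HasCompactSupport v)
    (hv_supp : Function.support v ⊆ Ioi 0) (hz : 0 ≤ z.re) (hz0 : z ≠ 0) :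
    IntegrableOn (fun s : ℝ => (v s : ℂ) * expInt (z * s)) (Ioi 0) := by
  refine ((integrable_div_self hv hv_cpt hv_supp).norm.div_const ‖z‖).integrableOn.mono'
    (ContinuousOn.aestronglyMeasurable
      ((continuous_ofReal.comp hv.continuous).continuousOn.mul
        (continuousOn_comp_mul_ofReal continuousOn_expInt hz hz0)) measurableSet_Ioi) ?_
  filter_upwards [ae_restrict_mem measurableSet_Ioi] with s (hs : 0 < s)
  have hexp : Real.exp (-(z * s).re) ≤ 1 :=
    Real.exp_le_one_iff.2 (neg_nonpos.2 (re_mul_ofReal_nonneg hz hs.le))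
  calc ‖(v s : ℂ) * expInt (z * s)‖ ≤ ‖v s / s‖ / ‖z‖ * Real.exp (-(z * s).re) :=
        norm_ofReal_mul_expInt_le hz hz0 hs (v s)
    _ ≤ ‖v s / s‖ / ‖z‖ := mul_le_of_le_one_right (by positivity) hexp

lemma integrable_deriv (hv : ContDiff ℝ 1 v) (hv_cpt : HasCompactSupport v) :
    Integrable (deriv v) :=
  (hv.continuous_deriv le_rfl).integrable_of_hasCompactSupport hv_cpt.deriv

lemma aestronglyMeasurable_deriv_mul_expInt₂ (hv : ContDiff ℝ 1 v) (hz : 0 ≤ z.re) (hz0 : z ≠ 0) :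
    AEStronglyMeasurable (fun s : ℝ => ((deriv v s : ℝ) : ℂ) * expInt₂ (z * s))
      (volume.restrict (Ioi 0)) :=
  ((continuous_ofReal.comp (hv.continuous_deriv le_rfl)).continuousOn.mul
    (continuousOn_comp_mul_ofReal continuousOn_expInt₂ hz hz0)).aestronglyMeasurable
      measurableSet_Ioi

lemma norm_deriv_mul_expInt₂_le (hz : 0 ≤ z.re) (hs : 0 ≤ s) :
    ‖((deriv v s : ℝ) : ℂ) * expInt₂ (z * s)‖ ≤ ‖deriv v s‖ * 2 := by
  rw [norm_mul, norm_real]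
  gcongr
  exact norm_expInt₂_le_two (re_mul_ofReal_nonneg hz hs)

lemma integrableOn_deriv_mul_expInt₂ (hv : ContDiff ℝ 1 v) (hv_cpt : HasCompactSupport v)
    (hz : 0 ≤ z.re) (hz0 : z ≠ 0) :
    IntegrableOn (fun s : ℝ => ((deriv v s : ℝ) : ℂ) * expInt₂ (z * s)) (Ioi 0) := by
  refine ((integrable_deriv hv hv_cpt).norm.mul_const 2).integrableOn.mono'
    (aestronglyMeasurable_deriv_mul_expInt₂ hv hz hz0) ?_
  filter_upwards [ae_restrict_mem measurableSet_Ioi] with s hs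
  exact norm_deriv_mul_expInt₂_le hz (le_of_lt hs)

lemma tendsto_mul_expInt₂_nhdsGT_zero (hv : Continuous v) (hv0 : v 0 = 0) (hz : 0 ≤ z.re) :
    Tendsto (fun s : ℝ => (v s : ℂ) * expInt₂ (z * s)) (𝓝[>] 0) (𝓝 0) := by
  refine Tendsto.zero_mul_isBoundedUnder_le ?_ (isBoundedUnder_of_eventually_le (a := 2) ?_)
  · have hcont : Continuous fun s => (v s : ℂ) := continuous_ofReal.comp hv
    simpa [hv0] using (hcont.tendsto 0).mono_left nhdsWithin_le_nhds
  · filter_upwards [self_mem_nhdsWithin] with s hs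
    exact norm_expInt₂_le_two (re_mul_ofReal_nonneg hz (le_of_lt hs))

lemma expIntTransform_eq_integral_deriv (hv : ContDiff ℝ 1 v) (hv_cpt : HasCompactSupport v)
    (hv_supp : Function.support v ⊆ Ioi 0) (hz : 0 ≤ z.re) (hz0 : z ≠ 0) :
    expIntTransform v z = z⁻¹ * ∫ s in Ioi (0 : ℝ), ((deriv v s : ℝ) : ℂ) * expInt₂ (z * s) := by
  have hv0 : v 0 = 0 := Function.notMem_support.1 fun h => (mem_Ioi.1 (hv_supp h)).false
  have hderiv (s : ℝ) (hs : s ∈ Ioi 0) :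
      HasDerivAt (fun s : ℝ => -z⁻¹ * expInt₂ (z * s)) (expInt (z * s)) s := by
    refine ((hasDerivAt_comp_mul_ofReal (hasDerivAt_expInt₂
      (mul_ofReal_mem_slitPlane hz hz0 hs))).const_mul (-z⁻¹)).congr_deriv ?_
    field_simp
  have hswap (f : ℝ → ℝ) : (fun s : ℝ => (f s : ℂ) * (-z⁻¹ * expInt₂ (z * s))) =
      fun s : ℝ => -z⁻¹ * ((f s : ℂ) * expInt₂ (z * s)) := by
    ext s
    ring
  have hparts := integral_Ioi_mul_deriv_eq_deriv_mul (a' := 0) (b' := 0)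
    (fun s _ => (hv.differentiable one_ne_zero s).hasDerivAt.ofReal_comp) hderiv
    (integrableOn_mul_expInt hv hv_cpt hv_supp hz hz0)
    (by
      simpa only [IntegrableOn, Pi.mul_def, hswap] using
        (integrableOn_deriv_mul_expInt₂ hv hv_cpt hz hz0).const_mul (-z⁻¹))
    (by
      simpa only [Pi.mul_def, hswap, mul_zero] using
        (tendsto_mul_expInt₂_nhdsGT_zero hv.continuous hv0 hz).const_mul (-z⁻¹))
    (tendsto_const_nhds.congr' (by
      filter_upwards [eventually_atTop_eq_zero_of_hasCompactSupport hv_cpt] with s hs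
      simp [hs]))
  rw [expIntTransform, hparts, hswap, integral_const_mul]
  ring

lemma continuousOn_expIntTransform (hv : ContDiff ℝ 1 v) (hv_cpt : HasCompactSupport v)
    (hv_supp : Function.support v ⊆ Ioi 0) :
    ContinuousOn (expIntTransform v) {z | 0 ≤ z.re ∧ z ≠ 0} := by
  have hintegral : ContinuousOn
      (fun z : ℂ => ∫ s in Ioi (0 : ℝ), ((deriv v s : ℝ) : ℂ) * expInt₂ (z * s))
      {z | 0 ≤ z.re ∧ z ≠ 0} := by
    refine continuousOn_of_dominated
      (fun z hz => aestronglyMeasurable_deriv_mul_expInt₂ hv hz.1 hz.2) (fun z hz => ?_)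
      ((integrable_deriv hv hv_cpt).norm.mul_const 2).integrableOn ?_
    · filter_upwards [ae_restrict_mem measurableSet_Ioi] with s hs
      exact norm_deriv_mul_expInt₂_le hz.1 (le_of_lt hs)
    · filter_upwards [ae_restrict_mem measurableSet_Ioi] with s hs
      exact continuousOn_const.mul (continuousOn_expInt₂.comp (by fun_prop)
        fun z hz => mul_ofReal_mem_slitPlane hz.1 hz.2 hs)
  exact ((continuousOn_id.inv₀ fun z hz => hz.2).mul hintegral).congr fun z hz =>
    expIntTransform_eq_integral_deriv hv hv_cpt hv_supp hz.1 hz.2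

lemma integrableOn_rpow_mul_of_hasCompactSupport {f : ℝ → ℝ} {a : ℝ} (ha : -1 < a)
    (hf : Continuous f) (hf_cpt : HasCompactSupport f) :
    IntegrableOn (fun s => s ^ a * f s) (Ioi 0) := by
  have hzero : f =O[𝓝[>] 0] fun s => s ^ (-0 : ℝ) := by
    simpa using (hf.continuousAt.isBigO_one ℝ).mono nhdsWithin_le_nhds
  have htop : f =O[atTop] fun s => s ^ (-(a + 2)) :=
    (isBigO_zero _ _).congr'
      ((eventually_atTop_eq_zero_of_hasCompactSupport hf_cpt).mono fun s hs => hs.symm) .rfl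
  simpa using mellin_convergent_of_isBigO_scalar (s := a + 1)
    (hf.locallyIntegrable.locallyIntegrableOn _) htop (by linarith) hzero (by linarith)

lemma exists_norm_expIntTransform_le_rpow (hv : ContDiff ℝ 1 v) (hv_cpt : HasCompactSupport v)
    (hv_supp : Function.support v ⊆ Ioi 0) :
    ∃ M, 0 ≤ M ∧
      ∀ z : ℂ, 0 ≤ z.re → z ≠ 0 → ‖expIntTransform v z‖ ≤ M * ‖z‖ ^ (-(3 / 2) : ℝ) := by
  refine ⟨Real.Gamma (3 / 2) * ∫ s in Ioi (0 : ℝ), s ^ (-(1 / 2) : ℝ) * ‖deriv v s‖,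
    mul_nonneg (Real.Gamma_pos_of_pos (by norm_num)).le
      (setIntegral_nonneg measurableSet_Ioi fun s (hs : 0 < s) => by positivity),
    fun z hz hz0 => ?_⟩
  have hz_pos : 0 < ‖z‖ := norm_pos_iff.2 hz0
  have hintegral : ‖∫ s in Ioi (0 : ℝ), ((deriv v s : ℝ) : ℂ) * expInt₂ (z * s)‖ ≤
      ∫ s in Ioi (0 : ℝ), ‖z‖ ^ (-(1 / 2) : ℝ) * Real.Gamma (3 / 2) *
        (s ^ (-(1 / 2) : ℝ) * ‖deriv v s‖) := by
    refine norm_integral_le_of_norm_le ((integrableOn_rpow_mul_of_hasCompactSupport (by norm_num)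
      (hv.continuous_deriv le_rfl).norm hv_cpt.deriv.norm).const_mul _) ?_
    filter_upwards [ae_restrict_mem measurableSet_Ioi] with s (hs : 0 < s)
    have hE := norm_expInt₂_le_rpow (re_mul_ofReal_nonneg hz hs.le)
      (slitPlane_ne_zero (mul_ofReal_mem_slitPlane hz hz0 hs))
    rw [norm_mul z, norm_real, Real.norm_of_nonneg hs.le, Real.mul_rpow hz_pos.le hs.le] at hE
    calc ‖((deriv v s : ℝ) : ℂ) * expInt₂ (z * s)‖ = ‖deriv v s‖ * ‖expInt₂ (z * s)‖ := by
          rw [norm_mul, norm_real]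
      _ ≤ ‖deriv v s‖ * (‖z‖ ^ (-(1 / 2) : ℝ) * s ^ (-(1 / 2) : ℝ) * Real.Gamma (3 / 2)) := by
          gcongr
      _ = _ := by ring
  have hpow : ‖z‖ ^ (-(3 / 2) : ℝ) = ‖z‖⁻¹ * ‖z‖ ^ (-(1 / 2) : ℝ) := by
    rw [← Real.rpow_neg_one, ← Real.rpow_add hz_pos]
    norm_num
  rw [expIntTransform_eq_integral_deriv hv hv_cpt hv_supp hz hz0, norm_mul, norm_inv, hpow]
  rw [integral_const_mul] at hintegral
  calc ‖z‖⁻¹ * ‖∫ s in Ioi (0 : ℝ), ((deriv v s : ℝ) : ℂ) * expInt₂ (z * s)‖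
      ≤ ‖z‖⁻¹ * (‖z‖ ^ (-(1 / 2) : ℝ) * Real.Gamma (3 / 2) *
          ∫ s in Ioi (0 : ℝ), s ^ (-(1 / 2) : ℝ) * ‖deriv v s‖) := by gcongr
    _ = _ := by ring

end Transform

section Laplace

/-- The cumulative distribution function `s ↦ ∫_0^s v` of a density `v` supported on the positive
half line. -/
noncomputable def cumulative (v : ℝ → ℝ) (s : ℝ) : ℝ := ∫ r in 0..s, v r

variable {v : ℝ → ℝ} {z : ℂ} {s : ℝ}

lemma hasDerivAt_cumulative (hv : Continuous v) (s : ℝ) : HasDerivAt (cumulative v) (v s) s :=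
  (hv.integral_hasStrictDerivAt 0 s).hasDerivAt

lemma continuous_cumulative (hv : Continuous v) : Continuous (cumulative v) :=
  continuous_iff_continuousAt.2 fun s => (hasDerivAt_cumulative hv s).continuousAt

lemma cumulative_zero (v : ℝ → ℝ) : cumulative v 0 = 0 :=
  intervalIntegral.integral_same

lemma cumulative_of_nonpos (hv_supp : Function.support v ⊆ Ioi 0) (hs : s ≤ 0) :
    cumulative v s = 0 := by
  refine intervalIntegral.integral_zero_ae (.of_forall fun r hr => ?_)
  rw [uIoc_of_ge hs] at hr
  exact Function.notMem_support.1 fun h => hr.2.not_gt (hv_supp h)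

lemma continuous_cumulative_div_self (hv : Continuous v) (hv_supp : Function.support v ⊆ Ioi 0) :
    Continuous fun s => cumulative v s / s := by
  have hv0 : v 0 = 0 := Function.notMem_support.1 fun h => (mem_Ioi.1 (hv_supp h)).false
  exact continuous_div_self_of_hasDerivAt_zero (continuous_cumulative hv) (cumulative_zero v)
    ((hasDerivAt_cumulative hv 0).congr_deriv hv0)

lemma exists_norm_cumulative_div_self_le (hv : Continuous v) (hv_cpt : HasCompactSupport v) :
    ∃ C, ∀ s, ‖cumulative v s / s‖ ≤ C := by
  obtain ⟨C, hC⟩ := hv_cpt.exists_bound_of_continuous hv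
  refine ⟨C, fun s => ?_⟩
  rw [norm_div]
  refine div_le_of_le_mul₀ (norm_nonneg _) ((norm_nonneg _).trans (hC 0)) ?_
  simpa [cumulative] using intervalIntegral.norm_integral_le_of_norm_le_const (a := 0) (b := s)
    fun r _ => hC r

lemma integrableOn_exp_neg_mul (hz : 0 < z.re) :
    IntegrableOn (fun s : ℝ => Real.exp (-(z * s).re)) (Ioi 0) := by
  simpa only [re_mul_ofReal, neg_mul] using integrableOn_exp_mul_Ioi (neg_neg_of_pos hz) 0

lemma tendsto_exp_neg_mul_atTop (hz : 0 < z.re) :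
    Tendsto (fun s : ℝ => Real.exp (-(z * s).re)) atTop (𝓝 0) := by
  simp only [re_mul_ofReal]
  exact Real.tendsto_exp_neg_atTop_nhds_zero.comp (tendsto_id.const_mul_atTop hz)

lemma norm_cumulative_div_self_mul_exp (v : ℝ → ℝ) (z : ℂ) (s : ℝ) :
    ‖(cumulative v s : ℂ) / s * exp (-(z * s))‖ =
      ‖cumulative v s / s‖ * Real.exp (-(z * s).re) := by
  rw [norm_mul, norm_exp, ← ofReal_div, norm_real, neg_re]

lemma continuous_cumulative_div_self_mul_exp (hv : Continuous v)
    (hv_supp : Function.support v ⊆ Ioi 0) (z : ℂ) :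
    Continuous fun s : ℝ => (cumulative v s : ℂ) / s * exp (-(z * s)) := by
  simp only [← ofReal_div]
  have := continuous_cumulative_div_self hv hv_supp
  fun_prop

lemma integrableOn_cumulative_div_self_mul_exp (hv : Continuous v) (hv_cpt : HasCompactSupport v)
    (hv_supp : Function.support v ⊆ Ioi 0) (hz : 0 < z.re) :
    IntegrableOn (fun s : ℝ => (cumulative v s : ℂ) / s * exp (-(z * s))) (Ioi 0) := by
  obtain ⟨C, hC⟩ := exists_norm_cumulative_div_self_le hv hv_cpt
  refine ((integrableOn_exp_neg_mul hz).const_mul C).mono'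
    (continuous_cumulative_div_self_mul_exp hv hv_supp z).aestronglyMeasurable
    (.of_forall fun s => ?_)
  rw [norm_cumulative_div_self_mul_exp]
  gcongr
  exact hC s

lemma tendsto_cumulative_mul_expInt_nhdsGT_zero (hv : Continuous v)
    (hv_supp : Function.support v ⊆ Ioi 0) (hz : 0 ≤ z.re) (hz0 : z ≠ 0) :
    Tendsto (fun s : ℝ => (cumulative v s : ℂ) * expInt (z * s)) (𝓝[>] 0) (𝓝 0) := by
  have hmajorant : Continuous
      fun s : ℝ => ‖cumulative v s / s‖ / ‖z‖ * Real.exp (-(z * s).re) := by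
    have := continuous_cumulative_div_self hv hv_supp
    simp only [re_mul_ofReal]
    fun_prop
  refine squeeze_zero_norm' ?_ ((hmajorant.tendsto' 0 0 (by simp)).mono_left nhdsWithin_le_nhds)
  filter_upwards [self_mem_nhdsWithin] with s hs
  exact norm_ofReal_mul_expInt_le hz hz0 hs _

lemma tendsto_cumulative_mul_expInt_atTop (hv : Continuous v) (hv_cpt : HasCompactSupport v)
    (hz : 0 < z.re) :
    Tendsto (fun s : ℝ => (cumulative v s : ℂ) * expInt (z * s)) atTop (𝓝 0) := by
  obtain ⟨C, hC⟩ := exists_norm_cumulative_div_self_le hv hv_cpt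
  refine squeeze_zero_norm' ?_
    (by simpa only [mul_zero] using (tendsto_exp_neg_mul_atTop hz).const_mul (C / ‖z‖))
  filter_upwards [eventually_gt_atTop 0] with s hs
  refine (norm_ofReal_mul_expInt_le hz.le (ne_zero_of_re_pos hz) hs _).trans ?_
  gcongr
  exact hC s

lemma expIntTransform_eq_laplace (hv : ContDiff ℝ 1 v) (hv_cpt : HasCompactSupport v)
    (hv_supp : Function.support v ⊆ Ioi 0) (hz : 0 < z.re) :
    expIntTransform v z = ∫ s in Ioi (0 : ℝ), (cumulative v s : ℂ) / s * exp (-(z * s)) := by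
  have hz0 : z ≠ 0 := ne_zero_of_re_pos hz
  have hderiv (s : ℝ) (hs : s ∈ Ioi 0) :
      HasDerivAt (fun s : ℝ => expInt (z * s)) (-exp (-(z * s)) / s) s := by
    refine (hasDerivAt_comp_mul_ofReal (hasDerivAt_expInt
      (mul_ofReal_mem_slitPlane hz.le hz0 hs))).congr_deriv ?_
    field_simp
  have hswap : (fun s : ℝ => (cumulative v s : ℂ) * (-exp (-(z * s)) / s)) =
      fun s : ℝ => -((cumulative v s : ℂ) / s * exp (-(z * s))) := by
    ext s
    ring
  have hparts := integral_Ioi_mul_deriv_eq_deriv_mul (a' := 0) (b' := 0)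
    (fun s _ => (hasDerivAt_cumulative hv.continuous s).ofReal_comp) hderiv
    (by
      simpa only [Pi.mul_def, hswap] using
        (integrableOn_cumulative_div_self_mul_exp hv.continuous hv_cpt hv_supp hz).fun_neg)
    (integrableOn_mul_expInt hv hv_cpt hv_supp hz.le hz0)
    (tendsto_cumulative_mul_expInt_nhdsGT_zero hv.continuous hv_supp hz.le hz0)
    (tendsto_cumulative_mul_expInt_atTop hv.continuous hv_cpt hz)
  rw [hswap, integral_neg, sub_zero, zero_sub, neg_inj] at hparts
  exact hparts.symm

end Laplace

section Poisson

variable {v : ℝ → ℝ} {z : ℂ} {θ : ℝ}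

lemma isBigO_cumulative_div_self_mul_exp (hv : Continuous v) (hv_cpt : HasCompactSupport v)
    (hv_supp : Function.support v ⊆ Ioi 0) (hz : 0 < z.re) :
    (fun s : ℝ => (cumulative v s : ℂ) / s * exp (-(z * s))) =O[cocompact ℝ]
      fun s => |s| ^ (-2 : ℝ) := by
  rw [cocompact_eq_atBot_atTop, isBigO_sup]
  constructor
  · refine (isBigO_zero _ _).congr' ?_ .rfl
    filter_upwards [eventually_le_atBot 0] with s hs
    simp [cumulative_of_nonpos hv_supp hs]
  · obtain ⟨C, hC⟩ := exists_norm_cumulative_div_self_le hv hv_cpt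
    have hexp : (fun s : ℝ => (cumulative v s : ℂ) / s * exp (-(z * s))) =O[atTop]
        fun s => Real.exp (-z.re * s) := by
      refine IsBigO.of_bound C (.of_forall fun s => ?_)
      rw [norm_cumulative_div_self_mul_exp, re_mul_ofReal, ← neg_mul, Real.norm_of_nonneg
        (Real.exp_pos _).le]
      gcongr
      exact hC s
    refine (hexp.trans (isLittleO_exp_neg_mul_rpow_atTop hz (-2)).isBigO).congr' .rfl ?_
    filter_upwards [eventually_ge_atTop 0] with s hs
    rw [abs_of_nonneg hs]

lemma fourier_cumulative_div_self_mul_exp (hv : ContDiff ℝ 1 v) (hv_cpt : HasCompactSupport v)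
    (hv_supp : Function.support v ⊆ Ioi 0) (hz : 0 < z.re) (ξ : ℝ) :
    𝓕 (fun s : ℝ => (cumulative v s : ℂ) / s * exp (-(z * s))) ξ =
      expIntTransform v (z + 2 * π * ξ * I) := by
  have hre : 0 < (z + 2 * π * ξ * I).re := by simpa using hz
  rw [Real.fourier_real_eq_integral_exp_smul, expIntTransform_eq_laplace hv hv_cpt hv_supp hre,
    ← setIntegral_eq_integral_of_forall_compl_eq_zero (s := Ioi 0)]
  · refine setIntegral_congr_fun measurableSet_Ioi fun s _ => ?_
    have hexp : exp (-((z + 2 * π * ξ * I) * s)) =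
        exp (↑(-2 * π * s * ξ) * I) * exp (-(z * s)) := by
      rw [← Complex.exp_add]
      push_cast
      ring_nf
    simp only [hexp, smul_eq_mul]
    ring
  · intro s hs
    rw [cumulative_of_nonpos hv_supp (not_lt.1 hs), ofReal_zero, zero_div, zero_mul, smul_zero]

lemma exists_summable_norm_expIntTransform_le (hv : ContDiff ℝ 1 v) (hv_cpt : HasCompactSupport v)
    (hv_supp : Function.support v ⊆ Ioi 0) (hθ : ∀ j : ℤ, θ + 2 * π * j ≠ 0) :
    ∃ b : ℤ → ℝ, Summable b ∧ ∀ z : ℂ, 0 ≤ z.re → z.im = θ →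
      ∀ j : ℤ, ‖expIntTransform v (z + 2 * π * j * I)‖ ≤ b j := by
  obtain ⟨M, hM, hbound⟩ := exists_norm_expIntTransform_le_rpow hv hv_cpt hv_supp
  refine ⟨fun j => M * ((2 * π) ^ (-(3 / 2) : ℝ) * (1 / |j + θ / (2 * π)| ^ (3 / 2 : ℝ))),
    (((Real.summable_one_div_int_add_rpow _ _).2 (by norm_num)).mul_left _).mul_left _,
    fun z hz him j => ?_⟩
  have him_j : (z + 2 * π * j * I).im = θ + 2 * π * j := by simp [him]
  have hre_j : 0 ≤ (z + 2 * π * j * I).re := by simpa using hz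
  have hne : z + 2 * π * j * I ≠ 0 := fun h => hθ j (by rw [← him_j, h, zero_im])
  calc ‖expIntTransform v (z + 2 * π * j * I)‖
      ≤ M * ‖z + 2 * π * j * I‖ ^ (-(3 / 2) : ℝ) := hbound _ hre_j hne
    _ ≤ M * |θ + 2 * π * j| ^ (-(3 / 2) : ℝ) := by
        refine mul_le_mul_of_nonneg_left ?_ hM
        refine Real.rpow_le_rpow_of_nonpos (abs_pos.2 (hθ j)) ?_ (by norm_num)
        exact him_j ▸ abs_im_le_norm _
    _ = M * (2 * π * |j + θ / (2 * π)|) ^ (-(3 / 2) : ℝ) := by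
        rw [← abs_of_pos Real.two_pi_pos, ← abs_mul, abs_of_pos Real.two_pi_pos]
        congr 3
        field_simp
        ring
    _ = M * ((2 * π) ^ (-(3 / 2) : ℝ) * (1 / |j + θ / (2 * π)| ^ (3 / 2 : ℝ))) := by
        rw [Real.mul_rpow Real.two_pi_pos.le (abs_nonneg _), Real.rpow_neg (abs_nonneg _), one_div]

lemma tsum_int_eq_tsum_nat_succ {f : ℤ → ℂ} (hf : ∀ n ≤ 0, f n = 0) :
    ∑' n : ℤ, f n = ∑' m : ℕ, f (m + 1) := by
  have hinj : Function.Injective fun m : ℕ => (m : ℤ) + 1 := fun a b h => by simpa using h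
  refine (hinj.tsum_eq fun n hn => ⟨(n - 1).toNat, ?_⟩).symm
  have hn_pos : 0 < n := not_le.1 fun h => hn (hf n h)
  simp only
  omega

lemma tsum_expIntTransform_eq (hv : ContDiff ℝ 1 v) (hv_cpt : HasCompactSupport v)
    (hv_supp : Function.support v ⊆ Ioi 0) (hz : 0 < z.re)
    (hz_im : ∀ j : ℤ, z.im + 2 * π * j ≠ 0) :
    ∑' j : ℤ, expIntTransform v (z + 2 * π * j * I) =
      ∑' m : ℕ, (cumulative v (m + 1) : ℂ) / (m + 1) * exp (-(z * (m + 1))) := by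
  obtain ⟨b, hb, hle⟩ := exists_summable_norm_expIntTransform_le hv hv_cpt hv_supp hz_im
  have hfourier (j : ℤ) := fourier_cumulative_div_self_mul_exp hv hv_cpt hv_supp hz j
  simp only [ofReal_intCast] at hfourier
  have hpoisson := Real.tsum_eq_tsum_fourier_of_rpow_decay_of_summable
    (continuous_cumulative_div_self_mul_exp hv.continuous hv_supp z) one_lt_two
    (isBigO_cumulative_div_self_mul_exp hv.continuous hv_cpt hv_supp hz)
    (by simpa only [hfourier] using Summable.of_norm_bounded hb (hle z hz.le rfl)) 0
  simp only [hfourier, QuotientAddGroup.mk_zero, fourier_eval_zero, mul_one, zero_add] at hpoisson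
  rw [← hpoisson, tsum_int_eq_tsum_nat_succ]
  · push_cast
    rfl
  · intro n hn
    rw [cumulative_of_nonpos hv_supp (Int.cast_nonpos.2 hn), ofReal_zero, zero_div, zero_mul]

end Poisson

section Tail

/-- The Fourier coefficient `(1 - V (m + 1)) / (m + 1)` of `F_X`, where `V` is the cumulative
distribution function of `v`. The index is shifted: `tailCoeff v m` belongs to the frequency
`m + 1`. -/
noncomputable def tailCoeff (v : ℝ → ℝ) (m : ℕ) : ℂ :=
  1 / ((m : ℂ) + 1) * ((1 - cumulative v (m + 1) : ℝ) : ℂ)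

variable {v : ℝ → ℝ} {z : ℂ}

lemma eventually_cumulative_eq_integral (hv_cpt : HasCompactSupport v)
    (hv_supp : Function.support v ⊆ Ioi 0) : ∀ᶠ s in atTop, cumulative v s = ∫ r, v r := by
  obtain ⟨R, hR⟩ := eventually_atTop.1 (eventually_atTop_eq_zero_of_hasCompactSupport hv_cpt)
  filter_upwards [eventually_ge_atTop R] with s hs
  refine intervalIntegral.integral_eq_integral_of_support_subset fun r hr => ⟨hv_supp hr, ?_⟩
  exact not_lt.1 fun hlt => hr (hR r (hs.trans hlt.le))

lemma finite_support_tailCoeff (hv_cpt : HasCompactSupport v)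
    (hv_supp : Function.support v ⊆ Ioi 0) (hv_mass : ∫ r, v r = 1) :
    (Function.support (tailCoeff v)).Finite := by
  have htop : Tendsto (fun m : ℕ => (m + 1 : ℝ)) atTop atTop :=
    tendsto_atTop_add_const_right _ 1 tendsto_natCast_atTop_atTop
  have hzero : ∀ᶠ m in cofinite, tailCoeff v m = 0 := by
    rw [Nat.cofinite_eq_atTop]
    filter_upwards [htop.eventually (eventually_cumulative_eq_integral hv_cpt hv_supp)] with m hm
    rw [tailCoeff, hm, hv_mass, sub_self, ofReal_zero, mul_zero]
  exact eventually_cofinite.1 hzero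

lemma continuous_tsum_tailCoeff_mul_exp (hv : (Function.support (tailCoeff v)).Finite) :
    Continuous fun z : ℂ => ∑' m : ℕ, tailCoeff v m * exp (-(z * (m + 1))) := by
  have hfinite (z : ℂ) : ∑' m : ℕ, tailCoeff v m * exp (-(z * (m + 1))) =
      ∑ m ∈ hv.toFinset, tailCoeff v m * exp (-(z * (m + 1))) := by
    refine tsum_eq_sum fun m hm => ?_
    rw [hv.mem_toFinset, Function.notMem_support] at hm
    rw [hm, zero_mul]
  simp_rw [hfinite]
  fun_prop

lemma hasSum_exp_neg_div_succ (hz : 0 < z.re) :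
    HasSum (fun m : ℕ => 1 / ((m : ℂ) + 1) * exp (-(z * (m + 1)))) (-log (1 - exp (-z))) := by
  have hnorm : ‖exp (-z)‖ < 1 := by simpa [norm_exp] using hz
  have hlog := (hasSum_nat_add_iff' 1).2 (hasSum_taylorSeries_neg_log hnorm)
  simp only [Finset.range_one, Finset.sum_singleton, Nat.cast_zero, div_zero, sub_zero] at hlog
  refine hlog.congr_fun fun m => ?_
  rw [← Complex.exp_nat_mul]
  push_cast
  ring_nf

lemma neg_log_sub_tsum_eq_of_re_pos (hv : ContDiff ℝ 1 v) (hv_cpt : HasCompactSupport v)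
    (hv_supp : Function.support v ⊆ Ioi 0) (hv_mass : ∫ r, v r = 1) (hz : 0 < z.re)
    (hz_im : ∀ j : ℤ, z.im + 2 * π * j ≠ 0) :
    -log (1 - exp (-z)) - ∑' j : ℤ, expIntTransform v (z + 2 * π * j * I) =
      ∑' m : ℕ, tailCoeff v m * exp (-(z * (m + 1))) := by
  have htail : Summable fun m : ℕ => tailCoeff v m * exp (-(z * (m + 1))) :=
    summable_of_hasFiniteSupport ((finite_support_tailCoeff hv_cpt hv_supp hv_mass).subset
      (Function.support_mul_subset_left _ _))
  have hlog := hasSum_exp_neg_div_succ hz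
  have hsplit (m : ℕ) : (cumulative v (m + 1) : ℂ) / (m + 1) * exp (-(z * (m + 1))) =
      1 / ((m : ℂ) + 1) * exp (-(z * (m + 1))) - tailCoeff v m * exp (-(z * (m + 1))) := by
    rw [tailCoeff]
    push_cast
    ring
  rw [tsum_expIntTransform_eq hv hv_cpt hv_supp hz hz_im, tsum_congr hsplit,
    hlog.summable.tsum_sub htail, hlog.tsum_eq, sub_sub_cancel]

lemma one_sub_exp_neg_mem_slitPlane (hz : 0 ≤ z.re) (hz_im : ∀ j : ℤ, z.im + 2 * π * j ≠ 0) :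
    1 - exp (-z) ∈ slitPlane := by
  have hcos : Real.cos z.im < 1 := by
    refine (Real.cos_le_one _).lt_of_ne fun h => ?_
    obtain ⟨n, hn⟩ := (Real.cos_eq_one_iff _).1 h
    refine hz_im (-n) ?_
    push_cast
    linarith
  have hexp : Real.exp (-z.re) ≤ 1 := Real.exp_le_one_iff.2 (neg_nonpos.2 hz)
  refine .inl ?_
  rw [sub_re, one_re, exp_re, neg_re, neg_im, Real.cos_neg]
  nlinarith [Real.exp_pos (-z.re)]

lemma tendsto_tsum_expIntTransform_ofReal_add (hv : ContDiff ℝ 1 v) (hv_cpt : HasCompactSupport v)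
    (hv_supp : Function.support v ⊆ Ioi 0) (hz : 0 ≤ z.re)
    (hz_im : ∀ j : ℤ, z.im + 2 * π * j ≠ 0) :
    Tendsto (fun ε : ℝ => ∑' j : ℤ, expIntTransform v (ε + z + 2 * π * j * I)) (𝓝[>] 0)
      (𝓝 (∑' j : ℤ, expIntTransform v (z + 2 * π * j * I))) := by
  obtain ⟨b, hb, hle⟩ := exists_summable_norm_expIntTransform_le hv hv_cpt hv_supp hz_im
  refine tendsto_tsum_of_dominated_convergence hb (fun j => ?_) ?_
  · have hne (ε : ℝ) : (ε : ℂ) + z + 2 * π * j * I ≠ 0 := fun h =>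
      hz_im j (by simpa using congrArg im h)
    have hcont := (continuousOn_expIntTransform hv hv_cpt hv_supp).comp (s := Ici (0 : ℝ))
      (f := fun ε : ℝ => (ε : ℂ) + z + 2 * π * j * I) (by fun_prop)
      fun ε (hε : 0 ≤ ε) => ⟨by simpa using add_nonneg hε hz, hne ε⟩
    simpa [Function.comp_def] using
      (hcont 0 self_mem_Ici).tendsto.mono_left (nhdsWithin_mono 0 Ioi_subset_Ici_self)
  · filter_upwards [self_mem_nhdsWithin] with ε (hε : 0 < ε) j
    exact hle (ε + z) (by simpa using add_nonneg hε.le hz) (by simp) j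

lemma neg_log_sub_tsum_eq (hv : ContDiff ℝ 1 v) (hv_cpt : HasCompactSupport v)
    (hv_supp : Function.support v ⊆ Ioi 0) (hv_mass : ∫ r, v r = 1) (hz : 0 ≤ z.re)
    (hz_im : ∀ j : ℤ, z.im + 2 * π * j ≠ 0) :
    -log (1 - exp (-z)) - ∑' j : ℤ, expIntTransform v (z + 2 * π * j * I) =
      ∑' m : ℕ, tailCoeff v m * exp (-(z * (m + 1))) := by
  have hshift : Tendsto (fun ε : ℝ => (ε : ℂ) + z) (𝓝[>] 0) (𝓝 z) :=
    ((continuous_ofReal.add continuous_const).tendsto' 0 z (by simp)).mono_left nhdsWithin_le_nhds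
  have hlog : ContinuousAt (fun z : ℂ => -log (1 - exp (-z))) z := by
    have hsub : ContinuousAt (fun z : ℂ => 1 - exp (-z)) z := by fun_prop
    exact (hsub.clog (one_sub_exp_neg_mem_slitPlane hz hz_im)).fun_neg
  have hleft := (hlog.tendsto.comp hshift).sub
    (tendsto_tsum_expIntTransform_ofReal_add hv hv_cpt hv_supp hz hz_im)
  have hright := ((continuous_tsum_tailCoeff_mul_exp
    (finite_support_tailCoeff hv_cpt hv_supp hv_mass)).tendsto z).comp hshift
  refine tendsto_nhds_unique (hleft.congr' ?_) hright
  filter_upwards [self_mem_nhdsWithin] with ε (hε : 0 < ε)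
  exact neg_log_sub_tsum_eq_of_re_pos hv hv_cpt hv_supp hv_mass
    (by simpa using add_pos_of_pos_of_nonneg hε hz) (by simpa using hz_im)

end Tail

section LogPullback

/-- The density of `l * log y` when `y` has density `u`, where `l = log X`. It is the density `v`
for which `U` is the transform `expIntTransform v` up to scaling of the argument by `l`. -/
noncomputable def logPullback (u : ℝ → ℝ) (l s : ℝ) : ℝ :=
  u (Real.exp (s / l)) * (Real.exp (s / l) / l)

variable {u : ℝ → ℝ} {l : ℝ}

lemma contDiff_logPullback {n : WithTop ℕ∞} (hu : ContDiff ℝ n u) (l : ℝ) :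
    ContDiff ℝ n (logPullback u l) := by
  unfold logPullback
  fun_prop

lemma eq_zero_of_le_of_support_subset_Ici {a y : ℝ} (hu : Continuous u)
    (hu_supp : Function.support u ⊆ Ici a) (hy : y ≤ a) : u y = 0 := by
  have hclosure : closure (Iio a) ⊆ {y | u y = 0} :=
    (isClosed_eq hu continuous_const).closure_subset_iff.2 fun y hy =>
      Function.notMem_support.1 fun h => (mem_Iio.1 hy).not_ge (hu_supp h)
  rw [closure_Iio] at hclosure
  exact hclosure hy

lemma support_logPullback_subset_Ioi (hu : Continuous u) (hu_supp : Function.support u ⊆ Ici 1)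
    (hl : 0 < l) : Function.support (logPullback u l) ⊆ Ioi 0 := by
  intro s hs
  by_contra hs0
  have hexp : Real.exp (s / l) ≤ 1 :=
    Real.exp_le_one_iff.2 (div_nonpos_of_nonpos_of_nonneg (not_lt.1 hs0) hl.le)
  refine hs ?_
  rw [logPullback, eq_zero_of_le_of_support_subset_Ici hu hu_supp hexp, zero_mul]

lemma hasCompactSupport_logPullback (hu_supp : Function.support u ⊆ Icc 1 (Real.exp 1))
    (hl : 0 < l) : HasCompactSupport (logPullback u l) := by
  refine HasCompactSupport.of_support_subset_isCompact (isCompact_Icc (a := 0) (b := l))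
    fun s hs => ?_
  obtain ⟨hlower, hupper⟩ := hu_supp (left_ne_zero_of_mul hs)
  exact ⟨by simpa only [zero_mul] using (le_div_iff₀ hl).1 (Real.one_le_exp_iff.1 hlower),
    (div_le_one hl).1 (Real.exp_le_exp.1 hupper)⟩

lemma hasDerivAt_exp_div (l s : ℝ) :
    HasDerivAt (fun s => Real.exp (s / l)) (Real.exp (s / l) / l) s := by
  simpa [div_eq_mul_inv] using ((hasDerivAt_id s).div_const l).exp

lemma cumulative_logPullback (hu : Continuous u) (l s : ℝ) :
    cumulative (logPullback u l) s = ∫ y in 1..Real.exp (s / l), u y := by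
  have hsubst := intervalIntegral.integral_comp_mul_deriv (a := 0) (b := s)
    (fun r _ => hasDerivAt_exp_div l r) (by fun_prop) hu
  rwa [zero_div, Real.exp_zero] at hsubst

lemma integral_Ioi_exp_div_smul {E : Type*} [NormedAddCommGroup E] [NormedSpace ℝ E] (hl : 0 < l)
    (f : ℝ → E) :
    ∫ s in Ioi (0 : ℝ), (Real.exp (s / l) / l) • f (Real.exp (s / l)) =
      ∫ y in Ioi (1 : ℝ), f y := by
  have himage : (fun s => Real.exp (s / l)) '' Ioi 0 = Ioi 1 := by
    ext y
    constructor
    · rintro ⟨s, hs, rfl⟩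
      exact Real.one_lt_exp_iff.2 (div_pos hs hl)
    · intro (hy : 1 < y)
      refine ⟨l * Real.log y, mul_pos hl (Real.log_pos hy), ?_⟩
      simp only [mul_div_cancel_left₀ _ hl.ne', Real.exp_log (one_pos.trans hy)]
  have hinj : InjOn (fun s => Real.exp (s / l)) (Ioi 0) :=
    fun r _ s _ h => (div_left_inj' hl.ne').1 (Real.exp_injective h)
  rw [← himage, integral_image_eq_integral_abs_deriv_smul measurableSet_Ioi
    (fun s _ => (hasDerivAt_exp_div l s).hasDerivWithinAt) hinj]
  simp only [abs_of_pos (div_pos (Real.exp_pos _) hl)]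

lemma Ufun_mul_eq_expIntTransform (hu_supp : Function.support u ⊆ Iic (Real.exp 1)) (hl : 0 < l)
    (z : ℂ) : Ufun u (z * l) = expIntTransform (logPullback u l) z := by
  rw [Ufun, intervalIntegral.integral_of_le (Real.one_le_exp zero_le_one),
    ← setIntegral_eq_of_subset_of_forall_sdiff_eq_zero measurableSet_Ioi Ioc_subset_Ioi_self,
    ← integral_Ioi_exp_div_smul hl, expIntTransform]
  · refine integral_congr_ae (.of_forall fun s => ?_)
    have hcancel : z * l * ((s / l : ℝ) : ℂ) = z * s := by
      have : (l : ℂ) ≠ 0 := ofReal_ne_zero.2 hl.ne'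
      push_cast
      field_simp
    simp only [logPullback, Real.log_exp, hcancel, real_smul]
    push_cast
    ring
  · intro y hy
    rw [Function.notMem_support.1 fun h => hy.2 ⟨hy.1, hu_supp h⟩, ofReal_zero, zero_mul]

lemma integral_logPullback (hu : Continuous u) (hu_supp : Function.support u ⊆ Ici 1)
    (hl : 0 < l) : ∫ s, logPullback u l s = ∫ y, u y := by
  have hsupp := support_logPullback_subset_Ioi hu hu_supp hl
  rw [← setIntegral_eq_integral_of_forall_compl_eq_zero (s := Ioi 0)
      fun s hs => Function.notMem_support.1 fun h => hs (hsupp h),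
    ← setIntegral_eq_integral_of_forall_compl_eq_zero (s := Ioi 1)
      fun y hy => eq_zero_of_le_of_support_subset_Ici hu hu_supp (not_lt.1 hy),
    ← integral_Ioi_exp_div_smul hl]
  simp only [logPullback, smul_eq_mul, mul_comm]

lemma integral_min_exp_eq_one_sub_cumulative (hu : Continuous u)
    (hu_supp : Function.support u ⊆ Icc 1 (Real.exp 1)) (hu_mass : ∫ y, u y = 1) (l s : ℝ) :
    ∫ y in min (Real.exp (s / l)) (Real.exp 1)..Real.exp 1, u y =
      1 - cumulative (logPullback u l) s := by
  have hmass {b : ℝ} (hb : Real.exp 1 ≤ b) : ∫ y in 1..b, u y = 1 := by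
    refine (intervalIntegral.integral_eq_integral_of_support_subset fun y hy => ⟨?_, ?_⟩).trans
      hu_mass
    · exact not_le.1 fun h =>
        hy (eq_zero_of_le_of_support_subset_Ici hu (hu_supp.trans Icc_subset_Ici_self) h)
    · exact (hu_supp hy).2.trans hb
  rw [cumulative_logPullback hu]
  rcases le_total (Real.exp (s / l)) (Real.exp 1) with hle | hge
  · rw [min_eq_left hle, eq_sub_iff_add_eq']
    exact (intervalIntegral.integral_add_adjacent_intervals (μ := volume)
      (hu.intervalIntegrable _ _) (hu.intervalIntegrable _ _)).trans (hmass le_rfl)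
  · rw [min_eq_right hge, hmass hge, sub_self, intervalIntegral.integral_same]

end LogPullback

section Singularity

variable {u : ℝ → ℝ} {X θ : ℝ}

lemma FX_eq_tsum_tailCoeff (hX : 1 < X) (hu : ContDiff ℝ 1 u)
    (hu_supp : Function.support u ⊆ Icc 1 (Real.exp 1)) (hu_mass : ∫ y, u y = 1)
    (hθ : ∀ j : ℤ, θ + 2 * π * j ≠ 0) :
    FX u X θ = ∑' m : ℕ, tailCoeff (logPullback u (Real.log X)) m * exp (-(I * θ * (m + 1))) := by
  have hl : 0 < Real.log X := Real.log_pos hX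
  have hU (j : ℤ) : Ufun u (I * ((θ : ℂ) + 2 * π * j) * Real.log X) =
      expIntTransform (logPullback u (Real.log X)) (I * θ + 2 * π * j * I) := by
    rw [Ufun_mul_eq_expIntTransform (hu_supp.trans Icc_subset_Iic_self) hl]
    ring_nf
  have hu_lower := hu_supp.trans Icc_subset_Ici_self
  rw [FX, tsum_congr hU]
  exact neg_log_sub_tsum_eq (contDiff_logPullback hu _) (hasCompactSupport_logPullback hu_supp hl)
    (support_logPullback_subset_Ioi hu.continuous hu_lower hl)
    ((integral_logPullback hu.continuous hu_lower hl).trans hu_mass) (by simp) (by simpa using hθ)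

lemma eventually_nhdsNE_zero_add_two_pi_mul_ne_zero :
    ∀ᶠ θ : ℝ in 𝓝[≠] 0, ∀ j : ℤ, θ + 2 * π * j ≠ 0 := by
  filter_upwards [self_mem_nhdsWithin,
    nhdsWithin_le_nhds (Ioo_mem_nhds (neg_neg_of_pos Real.two_pi_pos) Real.two_pi_pos)]
    with θ (hθ : θ ≠ 0) ⟨hlower, hupper⟩ j h
  refine hθ ((Real.cos_eq_one_iff_of_lt_of_lt hlower hupper).1 ((Real.cos_eq_one_iff θ).2 ⟨-j, ?_⟩))
  push_cast
  linarith

end Singularity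

theorem stmt_6_general (X : ℝ) (hX : 1 < X) (u : ℝ → ℝ) (hu : ContDiff ℝ 1 u)
    (hu_supp : Function.support u ⊆ Set.Icc 1 (Real.exp 1)) (hu_mass : (∫ y : ℝ, u y) = 1) :
    Tendsto (fun ϑ : ℝ => FX u X ϑ) (nhdsWithin 0 {(0 : ℝ)}ᶜ)
      (nhds (∑' m : ℕ,
        (1 / ((m : ℂ) + 1)) *
          ((∫ y in (min (Real.exp (((m : ℝ) + 1) / Real.log X)) (Real.exp 1))..(Real.exp 1),
              u y : ℝ) : ℂ))) := by
  have hl : 0 < Real.log X := Real.log_pos hX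
  have hu_lower := hu_supp.trans Icc_subset_Ici_self
  have hfinite := finite_support_tailCoeff (hasCompactSupport_logPullback hu_supp hl)
    (support_logPullback_subset_Ioi hu.continuous hu_lower hl)
    ((integral_logPullback hu.continuous hu_lower hl).trans hu_mass)
  have hseries : Continuous fun ϑ : ℝ =>
      ∑' m : ℕ, tailCoeff (logPullback u (Real.log X)) m * exp (-(I * ϑ * (m + 1))) :=
    (continuous_tsum_tailCoeff_mul_exp hfinite).comp (by fun_prop : Continuous fun ϑ : ℝ => I * ϑ)
  have hlimit := (hseries.tendsto 0).mono_left (nhdsWithin_le_nhds (s := {(0 : ℝ)}ᶜ))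
  simp only [ofReal_zero, mul_zero, zero_mul, neg_zero, exp_zero, mul_one] at hlimit
  simp_rw [integral_min_exp_eq_one_sub_cumulative hu.continuous hu_supp hu_mass]
  refine hlimit.congr' ?_
  filter_upwards [eventually_nhdsNE_zero_add_two_pi_mul_ne_zero] with ϑ hϑ
  exact (FX_eq_tsum_tailCoeff hX hu hu_supp hu_mass hϑ).symm

/-- the logarithmic singularities of `F_X` at ϑ = 0 cancel, and
`F_X(ϑ) → Σ_{m=1}^∞ (1/m) ∫_{min(e^{m/log X}, e)}^e u(y) dy` as ϑ → 0. -/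
theorem stmt_6 (X : ℝ) (hX : 1 < X) (u : ℝ → ℝ)
    (hu_smooth : ContDiff ℝ (⊤ : ℕ∞) u) (hu_nonneg : ∀ y, 0 ≤ u y)
    (hu_supp : Function.support u ⊆ Set.Icc 1 (Real.exp 1))
    (hu_mass : (∫ y : ℝ, u y) = 1) :
    Tendsto (fun ϑ : ℝ => FX u X ϑ) (nhdsWithin 0 {(0 : ℝ)}ᶜ)
      (nhds (∑' m : ℕ,
        (1 / ((m : ℂ) + 1)) *
          ((∫ y in (min (Real.exp (((m : ℝ) + 1) / Real.log X)) (Real.exp 1))..(Real.exp 1),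
              u y : ℝ) : ℂ))) :=
  stmt_6_general X hX u (hu_smooth.of_le (by norm_cast)) hu_supp hu_mass
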